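/- arXiv:1405.4676 — 2 statements merged into one kernel-verified Lean document; each statement's English description precedes it below -/
import Mathlib

section
/- There exists a universal constant C > 0 (independent of the graph and of all sets involved) with the following property. Let G be a graph on a finite vertex set ℐ, L ⊆ ℐ, L₀ = ℐ \ L. For Q ⊆ L define R(Q, L₀) = Σ_{r=1}^{|Q|} (−1)^r Σ** ∏_{s=1}^{r} χ_{L_s, L₀∪L₁∪⋯∪L_s}, where Σ** runs over all ordered r-tuples (L₁,…,L_r) of pairwise disjoint nonempty sets with L₁ ∪ ⋯ ∪ L_r = Q, and set R(∅, L₀) = 1. Then (i) χ̄_{L, L∪L₀} = Σ_{Q⊆L} R(Q, L₀), and (ii) |R(Q, L₀)| ≤ C^{|Q|} · |Q|! · χ_{Q, Q∪L₀} for every Q ⊆ L. -/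
/-!
Peeling off the first block `L₁` of an ordered partition of `Q` gives the recursion
`R(Q, K) = [Q = ∅] - ∑_{∅ ≠ A ⊆ Q} χ_{A, K ∪ A} R(Q \ A, K ∪ A)`
(`graphExpansionR_rec`), valid for every base set `K`; both claims follow from it by strong
induction, with `K` varying.

For (i), summing the recursion over `Q ⊆ L` shows that `∑_{Q ⊆ L} R(Q, K)` satisfies the same
recursion as `χ̄_{L, L ∪ K}`. For the latter this is the resolution of unity
`∑_{A ⊆ L} χ_{A, K ∪ A} χ̄_{L \ A, L ∪ K} = 1` (`sum_chi_mul_chiBar`): only the set `A` of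
vertices of `L` having a neighbour in `L ∪ K` contributes. Symmetry of the graph ensures that all
the neighbours in `L` of a vertex of `A` lie in `A` again.

For (ii), the constant `C = 2` works: inductively the right side of the recursion is at most
`χ_{Q, Q ∪ K} ∑_{m < n} (n choose m) 2 ^ m m!` with `n = |Q|`, and since `(n choose m) m! ≤ n!`
this sum is at most `n! ∑_{m < n} 2 ^ m ≤ 2 ^ n n!`.
-/

open scoped Classical

/-- The remainder term `R(Q, L₀)` of the graph expansion: an alternating sum over
ordered tuples of pairwise disjoint nonempty sets whose union is `Q`, with
`R(∅, L₀) = 1`. -/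
noncomputable def graphExpansionR {ι : Type} [Fintype ι] [DecidableEq ι]
    (adj : ι → ι → Prop) (L₀ Q : Finset ι) : ℝ :=
  if Q = ∅ then 1 else
    ∑ r ∈ Finset.Icc 1 Q.card, (-1 : ℝ) ^ r *
      ∑ Ls ∈ Finset.univ.filter (fun Ls : Fin r → Finset ι =>
          (∀ s, (Ls s).Nonempty) ∧ (∀ s s', s ≠ s' → Disjoint (Ls s) (Ls s')) ∧
          Finset.univ.biUnion Ls = Q),
        ∏ s : Fin r, ∏ i ∈ Ls s,
          (if ∃ k ∈ L₀ ∪ (Finset.Iic s).biUnion Ls, adj i k then (1 : ℝ) else 0)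

open Finset

/-! ### Adjacency indicators and ordered partitions -/

/-- The product `χ_{H, K}`: it is `1` if every vertex of `H` has a neighbour in `K`, and `0`
otherwise. -/
noncomputable def chi {ι : Type} (adj : ι → ι → Prop) (H K : Finset ι) : ℝ :=
  ∏ i ∈ H, (if ∃ k ∈ K, adj i k then (1 : ℝ) else 0)

/-- The product `χ̄_{H, K}`: it is `1` if no vertex of `H` has a neighbour in `K`, and `0`
otherwise. -/
noncomputable def chiBar {ι : Type} (adj : ι → ι → Prop) (H K : Finset ι) : ℝ :=
  ∏ i ∈ H, (1 - (if ∃ k ∈ K, adj i k then (1 : ℝ) else 0))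

/-- The ordered partitions of `Q` into `r` nonempty blocks. -/
noncomputable def orderedPartitions {ι : Type} [Fintype ι] [DecidableEq ι] (r : ℕ)
    (Q : Finset ι) : Finset (Fin r → Finset ι) :=
  Finset.univ.filter (fun Ls : Fin r → Finset ι =>
    (∀ s, (Ls s).Nonempty) ∧ (∀ s s', s ≠ s' → Disjoint (Ls s) (Ls s')) ∧
    Finset.univ.biUnion Ls = Q)

/-- The part of `R(Q, K)` coming from tuples of length `r`, without its sign. -/
noncomputable def partR {ι : Type} [Fintype ι] [DecidableEq ι]
    (adj : ι → ι → Prop) (r : ℕ) (K Q : Finset ι) : ℝ :=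
  ∑ Ls ∈ orderedPartitions r Q, ∏ s : Fin r, chi adj (Ls s) (K ∪ (Finset.Iic s).biUnion Ls)

section

variable {ι : Type}

/-! ### Properties of the indicators -/

lemma chi_eq (adj : ι → ι → Prop) (H K : Finset ι) :
    chi adj H K = if ∀ i ∈ H, ∃ k ∈ K, adj i k then 1 else 0 := by
  unfold chi
  rw [Finset.prod_ite_zero]
  simp

lemma chiBar_eq (adj : ι → ι → Prop) (H K : Finset ι) :
    chiBar adj H K = if ∀ i ∈ H, ¬ ∃ k ∈ K, adj i k then 1 else 0 := by
  unfold chiBar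
  rw [Finset.prod_congr rfl (g := fun i => if ¬ ∃ k ∈ K, adj i k then (1 : ℝ) else 0)
    (fun i _ => by by_cases h : ∃ k ∈ K, adj i k <;> simp only [h] <;> simp), Finset.prod_ite_zero]
  simp

lemma chi_nonneg (adj : ι → ι → Prop) (H K : Finset ι) : 0 ≤ chi adj H K := by
  rw [chi_eq]; split_ifs <;> norm_num

lemma chi_mono (adj : ι → ι → Prop) (H : Finset ι) {K K' : Finset ι} (h : K ⊆ K') :
    chi adj H K ≤ chi adj H K' := by
  rw [chi_eq, chi_eq]
  by_cases h1 : ∀ i ∈ H, ∃ k ∈ K, adj i k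
  · have h2 : ∀ i ∈ H, ∃ k ∈ K', adj i k := fun i hi =>
      let ⟨k, hk, ha⟩ := h1 i hi; ⟨k, h hk, ha⟩
    rw [if_pos h1, if_pos h2]
  · rw [if_neg h1]; split_ifs <;> norm_num

variable [DecidableEq ι]

lemma chi_mul_sdiff (adj : ι → ι → Prop) {A Q : Finset ι} (h : A ⊆ Q) (K : Finset ι) :
    chi adj A K * chi adj (Q \ A) K = chi adj Q K := by
  unfold chi
  rw [mul_comm, Finset.prod_sdiff h]

/-- A resolution of unity indexed by the set of vertices of `L` with a neighbour in `L ∪ K`. -/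
lemma sum_chi_mul_chiBar (adj : ι → ι → Prop) (hs : Symmetric adj) (L K : Finset ι) :
    ∑ A ∈ L.powerset, chi adj A (K ∪ A) * chiBar adj (L \ A) (L \ A ∪ (K ∪ A)) = 1 := by
  have hu : ∀ A ⊆ L, L \ A ∪ (K ∪ A) = L ∪ K := by
    intro A hA; ext x; have := @hA x; simp only [mem_union, mem_sdiff]; tauto
  set N := L.filter (fun i => ∃ k ∈ L ∪ K, adj i k) with hN
  rw [Finset.sum_eq_single_of_mem N (by simp [hN])]
  · rw [hu N (by simp [hN]), chi_eq, chiBar_eq, if_pos, if_pos, one_mul]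
    · intro i hi h
      simp only [hN, mem_sdiff, mem_filter] at hi
      exact hi.2 ⟨hi.1, h⟩
    · intro i hi
      obtain ⟨hiL, k, hk, hik⟩ := mem_filter.1 hi
      refine ⟨k, ?_, hik⟩
      rcases mem_union.1 hk with hk | hk
      · exact mem_union_right _ (mem_filter.2 ⟨hk, i, mem_union_left _ hiL, hs hik⟩)
      · exact mem_union_left _ hk
  · intro A hA hne
    rw [mem_powerset] at hA
    rw [hu A hA, chi_eq, chiBar_eq]
    by_contra h
    simp only [mul_ite, mul_one, mul_zero, ite_eq_right_iff, not_forall, exists_prop] at h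
    have h2 := h.1
    have h1 := h.2.1
    apply hne
    ext i
    rw [hN, mem_filter]
    constructor
    · intro hi
      obtain ⟨k, hk, hik⟩ := h1 i hi
      refine ⟨hA hi, k, ?_, hik⟩
      have := @hA k
      simp only [mem_union] at hk ⊢
      tauto
    · rintro ⟨hi, h3⟩
      by_contra hiA
      exact h2 i (mem_sdiff.2 ⟨hi, hiA⟩) h3

variable [Fintype ι]

/-! ### The recursion for the remainder -/

lemma mem_orderedPartitions {r : ℕ} {Q : Finset ι} {Ls : Fin r → Finset ι} :
    Ls ∈ orderedPartitions r Q ↔ (∀ s, (Ls s).Nonempty) ∧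
      (∀ s s', s ≠ s' → Disjoint (Ls s) (Ls s')) ∧ Finset.univ.biUnion Ls = Q := by
  simp [orderedPartitions]

/-- A tuple is an ordered partition of `Q` iff its first entry `A` is a nonempty subset of `Q`
and the remaining entries form an ordered partition of `Q \ A`. -/
lemma cons_mem_orderedPartitions {r : ℕ} {Q A : Finset ι} {Ls : Fin r → Finset ι} :
    (Fin.cons A Ls : Fin (r + 1) → Finset ι) ∈ orderedPartitions (r + 1) Q ↔
      A ∈ Q.powerset.erase ∅ ∧ Ls ∈ orderedPartitions r (Q \ A) := by
  simp only [mem_orderedPartitions, Fin.forall_fin_succ, Fin.cons_zero, Fin.cons_succ, ne_eq,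
    mem_erase, mem_powerset, not_true_eq_false, false_implies, true_and,
    Fin.succ_inj, (Fin.succ_ne_zero _), (Fin.succ_ne_zero _).symm, not_false_eq_true,
    true_implies, ← nonempty_iff_ne_empty]
  have hb : (univ : Finset (Fin (r + 1))).biUnion (Fin.cons A Ls : Fin (r + 1) → Finset ι)
      = A ∪ univ.biUnion Ls := by
    ext x; simp [Fin.exists_fin_succ]
  rw [hb]
  constructor
  · rintro ⟨⟨hA, hn⟩, ⟨hd, hd'⟩, rfl⟩
    refine ⟨⟨hA, subset_union_left⟩, hn, fun s s' h => (hd' s).2 s' h, ?_⟩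
    rw [union_sdiff_cancel_left]
    rw [disjoint_biUnion_right]
    exact fun s _ => hd s
  · rintro ⟨⟨hA, hAQ⟩, hn, hd, hQ⟩
    have h : Disjoint A (univ.biUnion Ls) := by rw [hQ]; exact disjoint_sdiff
    rw [disjoint_biUnion_right] at h
    exact ⟨⟨hA, hn⟩, ⟨fun s => h s (mem_univ s), fun s => ⟨(h s (mem_univ s)).symm, hd s⟩⟩,
      by rw [hQ, union_sdiff_of_subset hAQ]⟩

lemma partR_zero (adj : ι → ι → Prop) (K Q : Finset ι) :
    partR adj 0 K Q = if Q = ∅ then 1 else 0 := by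
  by_cases h : Q = ∅
  · subst h; simp [partR, orderedPartitions]
  · simp [partR, orderedPartitions, h, Ne.symm h]

/-- The recursion obtained by splitting off the first block of an ordered partition. -/
lemma partR_succ (adj : ι → ι → Prop) (r : ℕ) (K Q : Finset ι) :
    partR adj (r + 1) K Q =
      ∑ A ∈ Q.powerset.erase ∅, chi adj A (K ∪ A) * partR adj r (K ∪ A) (Q \ A) := by
  unfold partR
  simp_rw [Finset.mul_sum]
  rw [Finset.sum_sigma']
  refine Finset.sum_nbij' (fun Ls => ⟨Ls 0, Fin.tail Ls⟩)
    (fun p => (Fin.cons p.1 p.2 : Fin (r + 1) → Finset ι)) ?_ ?_ ?_ ?_ ?_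
  · intro Ls h
    rw [← Fin.cons_self_tail Ls, cons_mem_orderedPartitions] at h
    exact mem_sigma.2 h
  · rintro ⟨A, Ls⟩ h
    exact cons_mem_orderedPartitions.2 (mem_sigma.1 h)
  · intro Ls _
    exact Fin.cons_self_tail Ls
  · rintro ⟨A, Ls⟩ _
    simp
  · intro Ls _
    rw [Fin.prod_univ_succ]
    congr 1
    · congr 2
      ext x; simp
    · refine Finset.prod_congr rfl fun s _ => ?_
      congr 1
      ext x
      simp [Fin.exists_fin_succ, Fin.tail]

/-- A set of `n` elements has no partition into more than `n` nonempty blocks. -/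
lemma partR_eq_zero (adj : ι → ι → Prop) (r : ℕ) :
    ∀ K Q : Finset ι, Q.card < r → partR adj r K Q = 0 := by
  induction r with
  | zero => intro K Q h; omega
  | succ r ih =>
    intro K Q h
    rw [partR_succ]
    refine Finset.sum_eq_zero fun A hA => ?_
    rw [mem_erase, mem_powerset, ← nonempty_iff_ne_empty] at hA
    have := card_sdiff_add_card_eq_card hA.2
    have := hA.1.card_pos
    rw [ih _ _ (by omega), mul_zero]

/-- The range of `r` may be extended, in particular to a bound common to all subsets of `Q`. -/
lemma graphExpansionR_eq (adj : ι → ι → Prop) (K Q : Finset ι) {N : ℕ} (hN : Q.card ≤ N) :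
    graphExpansionR adj K Q = ∑ r ∈ range (N + 1), (-1 : ℝ) ^ r * partR adj r K Q := by
  by_cases h : Q = ∅
  · rw [Finset.sum_eq_single_of_mem 0 (by simp)]
    · simp [graphExpansionR, partR_zero, h]
    · intro r _ hr
      rw [partR_eq_zero _ _ _ _ (by rw [h, card_empty]; omega), mul_zero]
  · have : graphExpansionR adj K Q =
        ∑ r ∈ Icc 1 Q.card, (-1 : ℝ) ^ r * partR adj r K Q := by
      rw [graphExpansionR, if_neg h]
      rfl
    rw [this]
    refine Finset.sum_subset (fun r hr => ?_) fun r _ hr => ?_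
    · rw [mem_Icc] at hr; rw [mem_range]; omega
    · rcases Nat.eq_zero_or_pos r with rfl | h0
      · simp [partR_zero, h]
      · rw [partR_eq_zero _ _ _ _ (by rw [mem_Icc] at hr; omega), mul_zero]

/-- The recursion for `R(Q, K)` in which the first block is absorbed into the base set. -/
lemma graphExpansionR_rec (adj : ι → ι → Prop) (K Q : Finset ι) :
    graphExpansionR adj K Q = (if Q = ∅ then 1 else 0) -
      ∑ A ∈ Q.powerset.erase ∅, chi adj A (K ∪ A) * graphExpansionR adj (K ∪ A) (Q \ A) := by
  have h : ∀ A ∈ Q.powerset.erase ∅,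
      chi adj A (K ∪ A) * graphExpansionR adj (K ∪ A) (Q \ A) = ∑ r ∈ range (Q.card + 1),
        chi adj A (K ∪ A) * ((-1 : ℝ) ^ r * partR adj r (K ∪ A) (Q \ A)) := fun A _ => by
    rw [graphExpansionR_eq adj (K ∪ A) (Q \ A) (card_le_card sdiff_subset), Finset.mul_sum]
  rw [graphExpansionR_eq adj K Q (Nat.le_succ _), Finset.sum_range_succ', partR_zero,
    Finset.sum_congr rfl h, Finset.sum_comm]
  simp_rw [partR_succ, Finset.mul_sum]
  rw [pow_zero, one_mul, add_comm, sub_eq_add_neg, ← Finset.sum_neg_distrib]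
  congr 1
  refine Finset.sum_congr rfl fun r _ => ?_
  rw [← Finset.sum_neg_distrib]
  refine Finset.sum_congr rfl fun A _ => ?_
  ring

/-! ### The expansion identity -/

lemma sum_graphExpansionR (adj : ι → ι → Prop) (hs : Symmetric adj) (L : Finset ι) :
    ∀ K : Finset ι, ∑ Q ∈ L.powerset, graphExpansionR adj K Q = chiBar adj L (L ∪ K) := by
  induction L using Finset.strongInduction with
  | H L ih =>
    intro K
    have hunit := sum_chi_mul_chiBar adj hs L K
    rw [← Finset.add_sum_erase _ _ (empty_mem_powerset L)] at hunit
    have h0 : chi adj ∅ (K ∪ ∅) * chiBar adj (L \ ∅) (L \ ∅ ∪ (K ∪ ∅)) = chiBar adj L (L ∪ K) := by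
      simp [chi]
    rw [h0] at hunit
    rw [eq_sub_of_add_eq hunit, Finset.sum_congr rfl fun Q _ => graphExpansionR_rec adj K Q,
      Finset.sum_sub_distrib]
    congr 1
    · simp
    · -- The pairs `(Q, A)` with `∅ ≠ A ⊆ Q ⊆ L` correspond to `(A, Q \ A)`, `Q \ A ⊆ L \ A`.
      have h : ∀ A ∈ L.powerset.erase ∅,
          chi adj A (K ∪ A) * chiBar adj (L \ A) (L \ A ∪ (K ∪ A)) =
            ∑ B ∈ (L \ A).powerset, chi adj A (K ∪ A) * graphExpansionR adj (K ∪ A) B := by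
        intro A hA
        rw [mem_erase, mem_powerset, ← nonempty_iff_ne_empty] at hA
        rw [← ih (L \ A) (sdiff_ssubset hA.2 hA.1) (K ∪ A), Finset.mul_sum]
      rw [Finset.sum_congr rfl h, Finset.sum_sigma', Finset.sum_sigma']
      refine Finset.sum_nbij' (fun p => ⟨p.2, p.1 \ p.2⟩) (fun p => ⟨p.1 ∪ p.2, p.1⟩)
        ?_ ?_ ?_ ?_ ?_
      · rintro ⟨Q, A⟩ h
        simp only [mem_sigma, mem_erase, mem_powerset] at h ⊢
        exact ⟨⟨h.2.1, h.2.2.trans h.1⟩, sdiff_subset_sdiff h.1 subset_rfl⟩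
      · rintro ⟨A, B⟩ h
        simp only [mem_sigma, mem_erase, mem_powerset] at h ⊢
        exact ⟨union_subset h.1.2 (h.2.trans sdiff_subset), h.1.1, subset_union_left⟩
      · rintro ⟨Q, A⟩ h
        simp only [mem_sigma, mem_erase, mem_powerset] at h
        simp only [union_sdiff_of_subset h.2.2]
      · rintro ⟨A, B⟩ h
        simp only [mem_sigma, mem_erase, mem_powerset] at h
        simp only [union_sdiff_cancel_left (disjoint_sdiff.mono_right h.2)]
      · rintro ⟨Q, A⟩ _
        rfl

/-! ### The factorial bound -/

/-- The count that closes the induction in the bound on `R(Q, K)`. -/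
lemma sum_erase_empty_le (Q : Finset ι) :
    ∑ A ∈ Q.powerset.erase ∅, (2 : ℝ) ^ (Q \ A).card * (Q \ A).card.factorial ≤
      2 ^ Q.card * Q.card.factorial := by
  have h1 : ∑ A ∈ Q.powerset, (2 : ℝ) ^ (Q \ A).card * (Q \ A).card.factorial =
      ∑ A ∈ Q.powerset, (2 : ℝ) ^ A.card * A.card.factorial := by
    refine Finset.sum_nbij' (fun A => Q \ A) (fun A => Q \ A) ?_ ?_ ?_ ?_ ?_
    · intro A _; simp
    · intro A _; simp
    · intro A h; exact Finset.sdiff_sdiff_eq_self (mem_powerset.1 h)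
    · intro A h; exact Finset.sdiff_sdiff_eq_self (mem_powerset.1 h)
    · intro A _; rfl
  have h2 := Finset.sum_powerset_apply_card (fun m => (2 : ℝ) ^ m * m.factorial) (x := Q)
  rw [h2, Finset.sum_range_succ, ← Finset.add_sum_erase _ _ (empty_mem_powerset Q)] at h1
  simp only [sdiff_empty, Nat.choose_self, one_smul] at h1
  rw [add_comm, add_right_cancel_iff] at h1
  rw [h1]
  have h3 : ∀ m ∈ range Q.card, Q.card.choose m • ((2 : ℝ) ^ m * m.factorial) ≤
      2 ^ m * Q.card.factorial := by
    intro m hm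
    have h : Q.card.choose m * m.factorial ≤ Q.card.factorial := by
      rw [← Nat.choose_mul_factorial_mul_factorial (mem_range.1 hm).le]
      exact Nat.le_mul_of_pos_right _ (Nat.factorial_pos _)
    have h' : (Q.card.choose m : ℝ) * m.factorial ≤ Q.card.factorial := by exact_mod_cast h
    rw [nsmul_eq_mul, mul_left_comm]
    gcongr
  refine (Finset.sum_le_sum h3).trans ?_
  rw [← Finset.sum_mul, geom_sum_eq (by norm_num)]
  gcongr
  norm_num

lemma abs_graphExpansionR_le (adj : ι → ι → Prop) (Q : Finset ι) :
    ∀ K : Finset ι, |graphExpansionR adj K Q| ≤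
      2 ^ Q.card * Q.card.factorial * chi adj Q (Q ∪ K) := by
  induction Q using Finset.strongInduction with
  | H Q ih =>
    intro K
    by_cases hQ : Q = ∅
    · subst hQ; simp [graphExpansionR, chi]
    rw [graphExpansionR_rec, if_neg hQ, zero_sub, abs_neg]
    refine (Finset.abs_sum_le_sum_abs _ _).trans ?_
    refine le_trans ?_
      (mul_le_mul_of_nonneg_right (sum_erase_empty_le Q) (chi_nonneg adj Q (Q ∪ K)))
    rw [Finset.sum_mul]
    refine Finset.sum_le_sum fun A hA => ?_
    rw [mem_erase, mem_powerset, ← nonempty_iff_ne_empty] at hA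
    have hsub : K ∪ A ⊆ Q ∪ K := union_subset subset_union_right (hA.2.trans subset_union_left)
    have hu : Q \ A ∪ (K ∪ A) ⊆ Q ∪ K :=
      union_subset (sdiff_subset.trans subset_union_left) hsub
    rw [abs_mul, abs_of_nonneg (chi_nonneg _ _ _), ← chi_mul_sdiff adj hA.2, mul_left_comm]
    refine mul_le_mul (chi_mono adj A hsub) ?_ (abs_nonneg _) (chi_nonneg _ _ _)
    refine (ih (Q \ A) (sdiff_ssubset hA.2 hA.1) (K ∪ A)).trans ?_
    gcongr
    exact chi_mono adj _ hu

end

/-- There is a universal constant `C > 0` such that for every graph on a finite vertex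
set and every `L ⊆ ℐ`, `L₀ = ℐ \ L`: (i) `χ̄_{L,L∪L₀} = Σ_{Q ⊆ L} R(Q, L₀)`, and
(ii) `|R(Q, L₀)| ≤ C^{|Q|} |Q|! χ_{Q, Q∪L₀}` for every `Q ⊆ L`. -/
theorem graph_expansion_remainder_bound :
    ∃ C : ℝ, 0 < C ∧
      ∀ (ι : Type) [Fintype ι] [DecidableEq ι]
        (adj : ι → ι → Prop), Symmetric adj → Irreflexive adj →
        ∀ L L₀ : Finset ι, L₀ = Finset.univ \ L →
          ((∏ i ∈ L, (1 - (if ∃ k ∈ L ∪ L₀, adj i k then (1 : ℝ) else 0))) =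
              ∑ Q ∈ L.powerset, graphExpansionR adj L₀ Q) ∧
          (∀ Q ⊆ L, |graphExpansionR adj L₀ Q| ≤
              C ^ Q.card * Q.card.factorial *
                ∏ i ∈ Q, (if ∃ k ∈ Q ∪ L₀, adj i k then (1 : ℝ) else 0)) := by
  refine ⟨2, by norm_num, ?_⟩
  intro ι _ _ adj hs _ L L₀ _
  exact ⟨(sum_graphExpansionR adj hs L L₀).symm, fun Q _ => abs_graphExpansionR_le adj Q L₀⟩
end

section
/- Let K be a finite set partitioned into pairwise disjoint nonempty blocks S₁,…,S_j (j ≥ 1, S₁ ∪ ⋯ ∪ S_j = K). Let a : K → ℝ, let f : 𝒫(K) → ℝ with f_∅ = 1, and define E_M = Σ_{L⊆M} (−1)^{|L|} a^L f_{M\L} for M ⊆ K. Assume there are constants M₀ > 0 and 0 < δ ≤ 1 such that |a_i| ≤ M₀ for every i ∈ K and |E_L| ≤ δ^{|L|} M₀^{|L|} for every L ⊆ K. Then | Σ_{𝒬⊆{1,…,j}} (−1)^{|𝒬|} (∏_{i∈𝒬} f_{S_i}) · f_{K \ ∪_{i∈𝒬} S_i} | ≤ 4^{|K|} · δ^{j}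 · M₀^{|K|}. -/
/-!
Inverting the definition of `E` gives `f M = ∑_{L ⊆ M} a^{M \ L} E L`. Expanding every factor of
the alternating sum in this way, and gluing the chosen subsets of the disjoint sets `S i` (`i ∈ Q`)
and `K \ ⋃_{i ∈ Q} S i` into a single `M ⊆ K`, turns it into
`∑_{M ⊆ K} a^{K \ M} ∑_Q (-1)^{|Q|} (∏_{i ∈ Q} E (M ∩ S i)) E (M \ ⋃_{i ∈ Q} S i)`.

If `M` misses some block `S i`, then `E (M ∩ S i) = E ∅ = 1`, so the terms of `Q` and `Q ∪ {i}`
cancel and the inner sum vanishes (`clusterInner_eq_zero`). Otherwise `|M| ≥ j`, and each of the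
`2 ^ j` inner terms is at most `δ^{|M|} M₀^{|M|} ≤ δ^j M₀^{|M|}` (`abs_clusterInner_le`). Summing
over the `2 ^ |K|` sets `M` and using `j ≤ |K|` gives the bound.
-/

open Finset in
/-- Möbius inversion: the relation defining `E` from `f` expresses `f` through `E`. The coefficient
of `f P` in the double sum is `∏_{i ∈ M \ P} (-a i + a i)`, which is `0` unless `P = M`. -/
theorem cumulant_inversion {ι : Type*} [DecidableEq ι] (M : Finset ι)
    (a : ι → ℝ) (f E : Finset ι → ℝ)
    (hE : ∀ L ⊆ M, E L = ∑ N ∈ L.powerset,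
        (-1 : ℝ) ^ N.card * (∏ i ∈ N, a i) * f (L \ N)) :
    f M = ∑ L ∈ M.powerset, (∏ i ∈ M \ L, a i) * E L := by
  have h1 : ∑ L ∈ M.powerset, (∏ i ∈ M \ L, a i) * E L
      = ∑ P ∈ M.powerset, ∑ N ∈ (M \ P).powerset,
          (∏ i ∈ N, -a i) * (∏ i ∈ (M \ P) \ N, a i) * f P := by
    have : ∀ L ∈ M.powerset, (∏ i ∈ M \ L, a i) * E L
        = ∑ N ∈ L.powerset, (∏ i ∈ M \ L, a i) *
          ((-1 : ℝ) ^ N.card * (∏ i ∈ N, a i) * f (L \ N)) := by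
      intro L hL
      rw [hE L (mem_powerset.1 hL), mul_sum]
    rw [sum_congr rfl this, sum_sigma', sum_sigma']
    -- Reindex the pairs `N ⊆ L` by `P = L \ N`, so that `L = P ∪ N`.
    refine sum_bij' (fun x _ => ⟨x.1 \ x.2, x.2⟩) (fun x _ => ⟨x.1 ∪ x.2, x.2⟩) ?_ ?_ ?_ ?_ ?_
    · rintro ⟨L, N⟩ h
      simp only [mem_sigma, mem_powerset] at h ⊢
      obtain ⟨h1, h2⟩ := h
      refine ⟨sdiff_subset.trans h1, fun x hx => ?_⟩
      have := h1 (h2 hx)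
      simp [hx, this]
    · rintro ⟨P, N⟩ h
      simp only [mem_sigma, mem_powerset] at h ⊢
      exact ⟨union_subset h.1 (h.2.trans sdiff_subset), subset_union_right⟩
    · rintro ⟨L, N⟩ h
      simp only [mem_sigma, mem_powerset] at h
      simp [sdiff_union_of_subset h.2]
    · rintro ⟨P, N⟩ h
      simp only [mem_sigma, mem_powerset] at h
      have : Disjoint P N := (disjoint_sdiff.mono_right h.2)
      simp [union_sdiff_cancel_right this]
    · rintro ⟨L, N⟩ h
      simp only [mem_sigma, mem_powerset] at h
      have : (M \ (L \ N)) \ N = M \ L := by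
        ext x
        have := @h.2 x
        simp only [mem_sdiff]
        tauto
      simp only [this, prod_neg]
      ring
  rw [h1, sum_eq_single M]
  · simp
  · intro P hP hne
    rw [← sum_mul, ← prod_add]
    have hne' : (M \ P).Nonempty := by
      rw [sdiff_nonempty]
      exact fun h => hne (Subset.antisymm (mem_powerset.1 hP) h)
    obtain ⟨x, hx⟩ := hne'
    rw [prod_eq_zero hx (by simp), zero_mul]
  · simp

open Finset in
/-- A product of two subset sums over disjoint sets is a subset sum over their union. -/
theorem subsetSum_mul {ι : Type*} [DecidableEq ι] (A B : Finset ι) (hAB : Disjoint A B)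
    (a : ι → ℝ) (u v : Finset ι → ℝ) :
    (∑ L ∈ A.powerset, (∏ i ∈ A \ L, a i) * u L) * (∑ L ∈ B.powerset, (∏ i ∈ B \ L, a i) * v L)
      = ∑ M ∈ (A ∪ B).powerset, (∏ i ∈ (A ∪ B) \ M, a i) * (u (M ∩ A) * v (M ∩ B)) := by
  rw [sum_mul_sum, ← sum_product']
  refine sum_bij' (fun x _ => x.1 ∪ x.2) (fun M _ => (M ∩ A, M ∩ B)) ?_ ?_ ?_ ?_ ?_
  · rintro ⟨L, N⟩ h
    simp only [mem_product, mem_powerset] at h ⊢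
    exact union_subset_union h.1 h.2
  · intro M h
    simp
  · rintro ⟨L, N⟩ h
    simp only [mem_product, mem_powerset] at h
    have h1 := (hAB.mono_left h.1)
    have h2 := (hAB.mono_right h.2)
    simp [union_inter_distrib_right, inter_eq_left.2 h.1, inter_eq_left.2 h.2,
      disjoint_iff_inter_eq_empty.1 h1, disjoint_iff_inter_eq_empty.1 h2.symm]
  · intro M h
    simp only [mem_powerset] at h
    simp [← inter_union_distrib_left, inter_eq_left.2 h]
  · rintro ⟨L, N⟩ h
    simp only [mem_product, mem_powerset] at h
    have h1 := (hAB.mono_left h.1)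
    have h2 := (hAB.mono_right h.2)
    have e1 : (L ∪ N) ∩ A = L := by
      simp [union_inter_distrib_right, inter_eq_left.2 h.1, disjoint_iff_inter_eq_empty.1 h2.symm]
    have e2 : (L ∪ N) ∩ B = N := by
      simp [union_inter_distrib_right, inter_eq_left.2 h.2, disjoint_iff_inter_eq_empty.1 h1]
    have e3 : (A ∪ B) \ (L ∪ N) = (A \ L) ∪ (B \ N) := by
      ext x
      have := @h.1 x
      have := @h.2 x
      have : x ∈ A → x ∉ B := fun ha hb => disjoint_left.1 hAB ha hb
      simp only [mem_sdiff, mem_union]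
      tauto
    have e4 : Disjoint (A \ L) (B \ N) := hAB.mono sdiff_subset sdiff_subset
    simp only [e1, e2, e3, prod_union e4]
    ring

open Finset in
theorem prod_subsetSum {ι : Type*} [DecidableEq ι] {κ : Type*} [DecidableEq κ]
    (S : κ → Finset ι) (hS : ∀ i i', i ≠ i' → Disjoint (S i) (S i'))
    (a : ι → ℝ) (f E : Finset ι → ℝ)
    (hf : ∀ i, f (S i) = ∑ L ∈ (S i).powerset, (∏ x ∈ S i \ L, a x) * E L) (Q : Finset κ) :
    ∏ i ∈ Q, f (S i) = ∑ M ∈ (Q.biUnion S).powerset,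
      (∏ x ∈ Q.biUnion S \ M, a x) * ∏ i ∈ Q, E (M ∩ S i) := by
  induction Q using Finset.induction_on with
  | empty => simp
  | insert i Q hi ih =>
    have hd : Disjoint (S i) (Q.biUnion S) := by
      rw [disjoint_biUnion_right]
      exact fun k hk => hS i k (fun h => hi (h ▸ hk))
    rw [prod_insert hi, ih, hf i, subsetSum_mul _ _ hd, biUnion_insert]
    refine sum_congr rfl fun M _ => ?_
    rw [prod_insert hi]
    congr 2
    refine prod_congr rfl fun k hk => ?_
    rw [inter_assoc, inter_eq_right.2 (subset_biUnion_of_mem S hk)]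

/-- The coefficient of `a^{K \ M}` after the alternating sum over collections `Q` of blocks has been
expanded in the inverted cumulants `E`. -/
noncomputable def clusterInner {ι : Type*} [DecidableEq ι] {j : ℕ} (S : Fin j → Finset ι)
    (E : Finset ι → ℝ) (M : Finset ι) : ℝ :=
  ∑ Q ∈ (Finset.univ : Finset (Fin j)).powerset,
    (-1 : ℝ) ^ Q.card * ((∏ i ∈ Q, E (M ∩ S i)) * E (M \ Q.biUnion S))

open Finset in
/-- If `M` misses the block `S i`, adding `i` to `Q` only changes the sign of a term. -/
theorem clusterInner_eq_zero {ι : Type*} [DecidableEq ι] {j : ℕ} (S : Fin j → Finset ι)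
    (E : Finset ι → ℝ) (hE : E ∅ = 1) (M : Finset ι) (i : Fin j) (hi : M ∩ S i = ∅) :
    clusterInner S E M = 0 := by
  unfold clusterInner
  rw [← insert_erase (mem_univ i), sum_powerset_insert (notMem_erase i _), ← sum_add_distrib]
  refine sum_eq_zero fun Q hQ => ?_
  have hiQ : i ∉ Q := fun h => notMem_erase i _ (mem_powerset.1 hQ h)
  have e : M \ (S i ∪ Q.biUnion S) = M \ Q.biUnion S := by
    rw [← sup_eq_union, ← sdiff_sdiff, sdiff_eq_self_of_disjoint (disjoint_iff_inter_eq_empty.2 hi)]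
  rw [card_insert_of_notMem hiQ, prod_insert hiQ, biUnion_insert, hi, hE, e]
  ring

open Finset in
/-- The sets `M ∩ S i` (`i ∈ Q`) and `M \ ⋃_{i ∈ Q} S i` partition `M`, so every term is at most
`c ^ |M|` in absolute value. -/
theorem abs_clusterInner_le {ι : Type*} [DecidableEq ι] {j : ℕ} (S : Fin j → Finset ι)
    (hS : ∀ i i', i ≠ i' → Disjoint (S i) (S i'))
    (E : Finset ι → ℝ) (M : Finset ι) (c : ℝ) (hc : 0 ≤ c) (hE : ∀ L ⊆ M, |E L| ≤ c ^ L.card) :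
    |clusterInner S E M| ≤ 2 ^ j * c ^ M.card := by
  unfold clusterInner
  refine (abs_sum_le_sum_abs _ _).trans ?_
  have : ∀ Q ∈ (univ : Finset (Fin j)).powerset,
      |(-1 : ℝ) ^ Q.card * ((∏ i ∈ Q, E (M ∩ S i)) * E (M \ Q.biUnion S))| ≤ c ^ M.card := by
    intro Q _
    have hcard : M.card = (∑ i ∈ Q, (M ∩ S i).card) + (M \ Q.biUnion S).card := by
      rw [← card_biUnion, ← inter_biUnion, card_inter_add_card_sdiff]
      exact fun i _ k _ hik => (hS i k hik).mono inter_subset_right inter_subset_right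
    rw [abs_mul, abs_pow, abs_neg, abs_one, one_pow, one_mul, abs_mul, abs_prod, hcard, pow_add,
      ← prod_pow_eq_pow_sum]
    gcongr with i hi
    · exact hE _ inter_subset_left
    · exact hE _ sdiff_subset
  refine (sum_le_card_nsmul _ _ _ this).trans ?_
  simp

open Finset in

/-- Cluster bound: for a partition of `K` into nonempty blocks `S₁,…,S_j`, the
cumulant-type inversion `E` of a set function `f` (with `f ∅ = 1`), and bounds
`|a_i| ≤ M₀`, `|E_L| ≤ δ^{|L|} M₀^{|L|}` with `0 < δ ≤ 1`, one has
`|Σ_𝒬 (−1)^{|𝒬|} (∏_{i∈𝒬} f_{S_i}) f_{K∖∪_{i∈𝒬}S_i}| ≤ 4^{|K|} δ^j M₀^{|K|}`. -/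
theorem cluster_cumulant_bound {ι : Type*} [DecidableEq ι] (K : Finset ι)
    (j : ℕ) (hj : 1 ≤ j) (S : Fin j → Finset ι)
    (hSne : ∀ i, (S i).Nonempty)
    (hSdisj : ∀ i i', i ≠ i' → Disjoint (S i) (S i'))
    (hScover : Finset.univ.biUnion S = K)
    (a : ι → ℝ) (f : Finset ι → ℝ) (hf : f ∅ = 1)
    (E : Finset ι → ℝ)
    (hE : ∀ M ⊆ K, E M = ∑ L ∈ M.powerset,
        (-1 : ℝ) ^ L.card * (∏ i ∈ L, a i) * f (M \ L))
    (M₀ δ : ℝ) (hM₀ : 0 < M₀) (hδ0 : 0 < δ) (hδ1 : δ ≤ 1)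
    (ha : ∀ i ∈ K, |a i| ≤ M₀)
    (hEb : ∀ L ⊆ K, |E L| ≤ δ ^ L.card * M₀ ^ L.card) :
    |∑ Q ∈ (Finset.univ : Finset (Fin j)).powerset,
        (-1 : ℝ) ^ Q.card * (∏ i ∈ Q, f (S i)) * f (K \ Q.biUnion S)|
      ≤ 4 ^ K.card * δ ^ j * M₀ ^ K.card := by

  have hE0 : E ∅ = 1 := by
    rw [hE ∅ (empty_subset _)]
    simp [hf]
  have hSK : ∀ Q : Finset (Fin j), Q.biUnion S ⊆ K := fun Q => by
    rw [← hScover]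
    exact biUnion_subset_biUnion_of_subset_left S (subset_univ Q)
  have hinv : ∀ M ⊆ K, f M = ∑ L ∈ M.powerset, (∏ i ∈ M \ L, a i) * E L := fun M hM =>
    cumulant_inversion M a f E fun L hL => hE L (hL.trans hM)
  have hS1 : ∀ i, S i ⊆ K := fun i => by simpa using hSK {i}
  have hexp : ∑ Q ∈ (univ : Finset (Fin j)).powerset,
        (-1 : ℝ) ^ Q.card * (∏ i ∈ Q, f (S i)) * f (K \ Q.biUnion S)
      = ∑ M ∈ K.powerset, (∏ x ∈ K \ M, a x) * clusterInner S E M := by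
    simp only [clusterInner, mul_sum]
    rw [sum_comm]
    refine sum_congr rfl fun Q _ => ?_
    rw [mul_assoc, prod_subsetSum S hSdisj a f E (fun i => hinv _ (hS1 i)) Q,
      hinv _ sdiff_subset, subsetSum_mul _ _ disjoint_sdiff, union_sdiff_of_subset (hSK Q), mul_sum]
    refine sum_congr rfl fun M hM => ?_
    have e1 : M ∩ (K \ Q.biUnion S) = M \ Q.biUnion S := by
      rw [← inter_sdiff_assoc, inter_eq_left.2 (mem_powerset.1 hM)]
    have e2 : ∏ i ∈ Q, E (M ∩ Q.biUnion S ∩ S i) = ∏ i ∈ Q, E (M ∩ S i) :=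
      prod_congr rfl fun k hk => by
        rw [inter_assoc, inter_eq_right.2 (subset_biUnion_of_mem S hk)]
    rw [e1, e2]
    ring
  -- The blocks are nonempty and disjoint, so a set meeting all of them has at least `j` elements.
  have hjle : ∀ M ⊆ K, (∀ i, (M ∩ S i).Nonempty) → j ≤ M.card := by
    intro M hM h
    calc j = ∑ _i : Fin j, 1 := by simp
      _ ≤ ∑ i : Fin j, (M ∩ S i).card := sum_le_sum fun i _ => (h i).card_pos
      _ = (univ.biUnion fun i => M ∩ S i).card := by
        rw [card_biUnion]
        exact fun i _ k _ hik => (hSdisj i k hik).mono inter_subset_right inter_subset_right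
      _ ≤ M.card := card_le_card (biUnion_subset.2 fun i _ => inter_subset_left)
  have hjK : j ≤ K.card := hjle K Subset.rfl fun i => by
    rw [inter_eq_right.2 (hS1 i)]
    exact hSne i
  have hterm : ∀ M ∈ K.powerset, |(∏ x ∈ K \ M, a x) * clusterInner S E M|
      ≤ 2 ^ j * δ ^ j * M₀ ^ K.card := by
    intro M hM
    rw [mem_powerset] at hM
    by_cases h : ∀ i, (M ∩ S i).Nonempty
    · have h1 : |clusterInner S E M| ≤ 2 ^ j * (δ * M₀) ^ M.card :=
        abs_clusterInner_le S hSdisj E M (δ * M₀) (by positivity) fun L hL => by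
          rw [mul_pow]
          exact hEb L (hL.trans hM)
      have h2 : |∏ x ∈ K \ M, a x| ≤ M₀ ^ (K \ M).card := by
        rw [abs_prod]
        rw [← prod_const]
        exact prod_le_prod (fun _ _ => abs_nonneg _) fun x hx => ha x (sdiff_subset hx)
      have h3 : δ ^ M.card ≤ δ ^ j := pow_le_pow_of_le_one hδ0.le hδ1 (hjle M hM h)
      calc |(∏ x ∈ K \ M, a x) * clusterInner S E M|
          ≤ M₀ ^ (K \ M).card * (2 ^ j * (δ * M₀) ^ M.card) := by
            rw [abs_mul]
            gcongr
        _ = 2 ^ j * δ ^ M.card * M₀ ^ K.card := by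
            rw [← card_sdiff_add_card_eq_card hM, pow_add, mul_pow]
            ring
        _ ≤ 2 ^ j * δ ^ j * M₀ ^ K.card := by gcongr
    · push Not at h
      obtain ⟨i, hi⟩ := h
      rw [clusterInner_eq_zero S E hE0 M i hi]
      simp only [mul_zero, abs_zero]
      positivity
  rw [hexp]
  calc |∑ M ∈ K.powerset, (∏ x ∈ K \ M, a x) * clusterInner S E M|
      ≤ ∑ M ∈ K.powerset, |(∏ x ∈ K \ M, a x) * clusterInner S E M| := abs_sum_le_sum_abs _ _
    _ ≤ K.powerset.card • (2 ^ j * δ ^ j * M₀ ^ K.card) := sum_le_card_nsmul _ _ _ hterm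
    _ = 2 ^ K.card * 2 ^ j * δ ^ j * M₀ ^ K.card := by
        rw [card_powerset, nsmul_eq_mul]
        push_cast
        ring
    _ ≤ 2 ^ K.card * 2 ^ K.card * δ ^ j * M₀ ^ K.card := by
        gcongr
        norm_num
    _ = 4 ^ K.card * δ ^ j * M₀ ^ K.card := by
        rw [← mul_pow]
        norm_num
end
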